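/- arXiv:1304.6216 — 2 statements merged into one kernel-verified Lean document; each statement's English description precedes it below -/
import Mathlib

section
/- Let k be an algebraically closed field and let A be a commutative Hopf algebra over k which is the union of a directed (under inclusion) family (A_i)_{i ∈ I} of finitely generated sub-Hopf-algebras, where the directed index poset I is at most countable. Then every torsor algebra B for A admits a k-algebra homomorphism B → k. (Equivalently: every torsor under the affine group scheme G = Spec A over k is trivial, i.e. has a k-rational point.) -/
open TensorProduct

/-- `S` is a sub-Hopf-algebra of `A`: it is closed under the comultiplication (its image lies in
`S ⊗ S` inside `A ⊗ A`) and under the antipode. -/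
def Subalgebra.IsHopfSub (k : Type*) {A : Type*} [CommSemiring k] [Semiring A]
    [HopfAlgebra k A] (S : Subalgebra k A) : Prop :=
  (∀ a ∈ S, Coalgebra.comul (R := k) a ∈
      LinearMap.range (TensorProduct.map S.val.toLinearMap S.val.toLinearMap)) ∧
  (∀ a ∈ S, HopfAlgebra.antipode (R := k) a ∈ S)

/-- `B`, with coaction `ρ`, is a torsor algebra for the Hopf algebra `A`: `B` is a nonzero
comodule algebra over `A` and the Galois map `B ⊗ B → B ⊗ A`, `b ⊗ b' ↦ (b ⊗ 1) * ρ b'`,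
is bijective. -/
structure IsTorsorAlgebra (k : Type*) [CommSemiring k] (A : Type*) [CommSemiring A]
    [HopfAlgebra k A] (B : Type*) [CommSemiring B] [Algebra k B]
    (ρ : B →ₐ[k] B ⊗[k] A) : Prop where
  nontrivial : Nontrivial B
  counit_coaction : ∀ b : B,
    (TensorProduct.rid k B) ((TensorProduct.map LinearMap.id (Coalgebra.counit (R := k))) (ρ b)) = b
  coassoc : ∀ b : B,
    (TensorProduct.assoc k B A A) ((TensorProduct.map ρ.toLinearMap LinearMap.id) (ρ b)) =
      (TensorProduct.map LinearMap.id (Coalgebra.comul (R := k))) (ρ b)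
  galois_bijective : Function.Bijective
    (Algebra.TensorProduct.lift (Algebra.TensorProduct.includeLeft : B →ₐ[k] B ⊗[k] A) ρ
      (fun _ _ => Commute.all _ _))

/-!
Replacing `A` by a sub-Hopf-algebra `S` replaces the torsor `Spec B` by its quotient, whose
coordinate ring consists of the `b` with `ρ b ∈ B ⊗ S`; this is again a torsor, now under the
algebraic group `Spec S`. A cofinal sequence of the `𝒜 i` turns `Spec B` into the limit of a
sequence of torsors of finite type, the first of which has a point by the Nullstellensatz. It then
suffices to lift points along each transition map `Spec B' → Spec B`. That map is dominant, so by
Chevalley's theorem all points of a nonempty open subset lift; a given point is translated into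
this subset by an element `g` that comes from the bigger group, lifted there, and the lift is
translated back.
-/

open PrimeSpectrum Topology
open Algebra.TensorProduct (includeLeft includeRight)

theorem exists_basicOpen_subset_of_minimalPrimes_subset {R : Type*} [CommRing R] [Nontrivial R]
    {s : Set (PrimeSpectrum R)} (hs : IsConstructible s)
    (hmin : ∀ p : PrimeSpectrum R, p.asIdeal ∈ minimalPrimes R → p ∈ s) :
    ∃ r : R, ¬IsNilpotent r ∧ (basicOpen r : Set (PrimeSpectrum R)) ⊆ s := by
  obtain ⟨S, _, f, hf⟩ := exists_range_eq_of_isConstructible hs.compl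
  have not_dense : ¬DenseRange (comap f) := by
    obtain ⟨p, hp⟩ : (minimalPrimes R).Nonempty :=
      Set.nonempty_coe_sort.mp (Ideal.nonempty_minimalPrimes bot_ne_top)
    rw [denseRange_comap_iff_minimalPrimes, hf]
    exact fun h => h p hp (hmin ⟨p, hp.1.1⟩ hp)
  rw [denseRange_comap_iff_ker_le_nilRadical] at not_dense
  obtain ⟨r, hr, hr'⟩ := SetLike.not_le_iff_exists.mp not_dense
  refine ⟨r, hr', Set.compl_subset_compl.mp ?_⟩
  rw [← hf]
  rintro _ ⟨q, rfl⟩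
  simp_all [RingHom.mem_ker]

section Points

variable {k : Type*} [Field k] [IsAlgClosed k]

theorem exists_algHom_le_ker {R : Type*} [CommRing R] [Algebra k R] [Algebra.FiniteType k R]
    {I : Ideal R} (hI : I ≠ ⊤) : ∃ φ : R →ₐ[k] k, I ≤ RingHom.ker φ := by
  obtain ⟨M, hM, hIM⟩ := I.exists_le_maximal hI
  let : Field (R ⧸ M) := Ideal.Quotient.field M
  have : Module.Finite k (R ⧸ M) := finite_of_finite_type_of_isJacobsonRing k (R ⧸ M)
  let e : k ≃ₐ[k] R ⧸ M := AlgEquiv.ofBijective (Algebra.ofId k (R ⧸ M))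
    IsAlgClosed.algebraMap_bijective_of_isIntegral
  refine ⟨(e.symm : R ⧸ M →ₐ[k] k).comp (Ideal.Quotient.mkₐ k M), fun x hx => ?_⟩
  simpa [RingHom.mem_ker] using Ideal.Quotient.eq_zero_iff_mem.mpr (hIM hx)

theorem exists_algHom_apply_ne_zero {R : Type*} [CommRing R] [Algebra k R]
    [Algebra.FiniteType k R] {x : R} (hx : ¬IsNilpotent x) : ∃ φ : R →ₐ[k] k, φ x ≠ 0 := by
  have : Nontrivial (Localization.Away x) := by
    rwa [← not_subsingleton_iff_nontrivial, IsLocalization.subsingleton_iff (M := .powers x)]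
  have : Algebra.FiniteType R (Localization.Away x) :=
    IsLocalization.finiteType_of_monoid_fg (.powers x) _
  have : Algebra.FiniteType k (Localization.Away x) := .trans ‹Algebra.FiniteType k R› this
  obtain ⟨φ, -⟩ := exists_algHom_le_ker (k := k) (bot_ne_top (α := Ideal (Localization.Away x)))
  exact ⟨φ.comp (IsScalarTower.toAlgHom k R _),
    ((IsLocalization.Away.algebraMap_isUnit x).map φ).ne_zero⟩

variable {R T : Type*} [CommRing R] [CommRing T] [Algebra k R] [Algebra k T]
  [Algebra.FiniteType k T]

theorem exists_algHom_comp_eq_of_ker_mem_range_comap (i : R →ₐ[k] T) (φ : R →ₐ[k] k)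
    (h : (⟨RingHom.ker φ, RingHom.ker_isPrime φ⟩ : PrimeSpectrum R) ∈
      Set.range (comap (i : R →+* T))) :
    ∃ φ' : T →ₐ[k] k, φ'.comp i = φ := by
  obtain ⟨Q, hQ⟩ := h
  have hQker : Q.asIdeal.comap (i : R →+* T) = RingHom.ker φ := congrArg PrimeSpectrum.asIdeal hQ
  obtain ⟨φ', hφ'⟩ := exists_algHom_le_ker (k := k) Q.isPrime.ne_top
  refine ⟨φ', AlgHom.ext fun b => ?_⟩
  have hb : b - algebraMap k R (φ b) ∈ Q.asIdeal.comap (i : R →+* T) := by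
    simp [hQker, RingHom.mem_ker]
  simpa [RingHom.mem_ker, sub_eq_zero] using hφ' (Ideal.mem_comap.mp hb)

theorem exists_forall_exists_algHom_comp_eq [Nontrivial R] [Algebra.FiniteType k R]
    (i : R →ₐ[k] T) (hi : Function.Injective i) :
    ∃ r : R, ¬IsNilpotent r ∧
      ∀ φ : R →ₐ[k] k, φ r ≠ 0 → ∃ φ' : T →ₐ[k] k, φ'.comp i = φ := by
  have : IsNoetherianRing R := Algebra.FiniteType.isNoetherianRing k R
  have hfp : (i : R →+* T).FinitePresentation := by
    refine RingHom.FinitePresentation.of_finiteType.mp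
      (RingHom.FiniteType.of_comp_finiteType (f := algebraMap k R) ?_)
    rw [i.comp_algebraMap]
    exact RingHom.finiteType_algebraMap.mpr inferInstance
  obtain ⟨r, hr, hrange⟩ := exists_basicOpen_subset_of_minimalPrimes_subset
    (isConstructible_range_comap hfp) fun p hp => by
      obtain ⟨Q, hQ, hQp⟩ := Ideal.exists_comap_eq_of_mem_minimalPrimes_of_injective
        (f := (i : R →+* T)) hi _ hp
      exact ⟨⟨Q, hQ⟩, PrimeSpectrum.ext hQp⟩
  exact ⟨r, hr, fun φ hφ => exists_algHom_comp_eq_of_ker_mem_range_comap i φ (hrange hφ)⟩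

end Points

section TensorSubmodule

variable {R : Type*} [CommRing R] {X Y Y' : Type*} [AddCommGroup X] [AddCommGroup Y]
  [AddCommGroup Y'] [Module R X] [Module R Y] [Module R Y']

theorem mem_range_lTensor_comap_subtype_iff [Module.Flat R X] (f : Y →ₗ[R] Y')
    (W : Submodule R Y') (z : X ⊗[R] Y) :
    z ∈ LinearMap.range ((W.comap f).subtype.lTensor X) ↔
      f.lTensor X z ∈ LinearMap.range (W.subtype.lTensor X) := by
  have hker : W.comap f = LinearMap.ker (W.mkQ ∘ₗ f) := by
    rw [LinearMap.ker_comp, W.ker_mkQ]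
  have hrange : LinearMap.range ((LinearMap.ker (W.mkQ ∘ₗ f)).subtype.lTensor X) =
      LinearMap.ker ((W.mkQ ∘ₗ f).lTensor X) :=
    (Module.Flat.lTensor_exact X (LinearMap.exact_subtype_ker_map _)).linearMap_ker_eq.symm
  rw [hker, hrange, ← lTensor_mkQ, LinearMap.mem_ker, LinearMap.mem_ker, LinearMap.lTensor_comp,
    LinearMap.comp_apply]

theorem mem_range_map_subtype_of_mem_range_rTensor_of_mem_range_lTensor
    {V : Submodule R X} {W : Submodule R Y} [Module.Flat R (X ⧸ V)] {z : X ⊗[R] Y}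
    (hV : z ∈ LinearMap.range (V.subtype.rTensor Y))
    (hW : z ∈ LinearMap.range (W.subtype.lTensor X)) :
    z ∈ LinearMap.range (map V.subtype W.subtype) := by
  obtain ⟨w, rfl⟩ := hW
  obtain ⟨v, rfl⟩ : w ∈ LinearMap.range (V.subtype.rTensor W) := by
    rw [← rTensor_mkQ, LinearMap.mem_ker] at hV ⊢
    refine Module.Flat.lTensor_preserves_injective_linearMap (M := X ⧸ V) W.subtype
      W.subtype_injective ?_
    rwa [← LinearMap.comp_apply, LinearMap.lTensor_comp_rTensor, ← LinearMap.rTensor_comp_lTensor,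
      LinearMap.comp_apply, map_zero]
  exact ⟨v, by rw [← LinearMap.comp_apply, LinearMap.lTensor_comp_rTensor]⟩

end TensorSubmodule

section TensorSubalgebra

variable {k : Type*} [Field k] {X Y Z X' Y' : Type*} [CommRing X] [CommRing Y] [CommRing Z]
  [CommRing X'] [CommRing Y'] [Algebra k X] [Algebra k Y] [Algebra k Z] [Algebra k X']
  [Algebra k Y']

/-- The image of `V ⊗ W` in `X ⊗ Y`, for subalgebras `V` of `X` and `W` of `Y`. -/
def tensorSubalgebra (V : Subalgebra k X) (W : Subalgebra k Y) : Subalgebra k (X ⊗[k] Y) :=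
  (Algebra.TensorProduct.map V.val W.val).range

theorem map_val_injective (V : Subalgebra k X) (W : Subalgebra k Y) :
    Function.Injective (Algebra.TensorProduct.map V.val W.val) :=
  map_injective_of_flat_flat _ _ Subtype.val_injective Subtype.val_injective

theorem tmul_mem_tensorSubalgebra {V : Subalgebra k X} {W : Subalgebra k Y} {x : X} {y : Y}
    (hx : x ∈ V) (hy : y ∈ W) : x ⊗ₜ[k] y ∈ tensorSubalgebra V W :=
  ⟨(⟨x, hx⟩ : V) ⊗ₜ (⟨y, hy⟩ : W), rfl⟩

theorem tensorSubalgebra_le_iff {V : Subalgebra k X} {W : Subalgebra k Y}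
    {D : Subalgebra k (X ⊗[k] Y)} :
    tensorSubalgebra V W ≤ D ↔
      (∀ x ∈ V, x ⊗ₜ[k] 1 ∈ D) ∧ ∀ y ∈ W, 1 ⊗ₜ[k] y ∈ D := by
  rw [tensorSubalgebra, Algebra.TensorProduct.map_range, sup_le_iff]
  simp [SetLike.le_def]

theorem tensorSubalgebra_le_comap {V : Subalgebra k X} {W : Subalgebra k Y}
    {D : Subalgebra k Z} {f : X ⊗[k] Y →ₐ[k] Z} (hV : ∀ x ∈ V, f (x ⊗ₜ[k] 1) ∈ D)
    (hW : ∀ y ∈ W, f (1 ⊗ₜ[k] y) ∈ D) : tensorSubalgebra V W ≤ D.comap f :=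
  tensorSubalgebra_le_iff.mpr ⟨hV, hW⟩

theorem tensorSubalgebra_top_top :
    tensorSubalgebra (⊤ : Subalgebra k X) (⊤ : Subalgebra k Y) = ⊤ :=
  AlgHom.range_eq_top _ |>.mpr <| map_surjective (fun x => ⟨⟨x, trivial⟩, rfl⟩)
    fun y => ⟨⟨y, trivial⟩, rfl⟩

theorem tensorSubalgebra_mono {V V' : Subalgebra k X} {W W' : Subalgebra k Y} (hV : V ≤ V')
    (hW : W ≤ W') : tensorSubalgebra V W ≤ tensorSubalgebra V' W' :=
  tensorSubalgebra_le_iff.mpr ⟨fun _ hx => tmul_mem_tensorSubalgebra (hV hx) (one_mem _),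
    fun _ hy => tmul_mem_tensorSubalgebra (one_mem _) (hW hy)⟩

theorem map_mem_tensorSubalgebra {V : Subalgebra k X} {W : Subalgebra k Y} {V' : Subalgebra k X'}
    {W' : Subalgebra k Y'} {f : X →ₐ[k] X'} {g : Y →ₐ[k] Y'} (hf : V ≤ V'.comap f)
    (hg : W ≤ W'.comap g) {z : X ⊗[k] Y} (hz : z ∈ tensorSubalgebra V W) :
    Algebra.TensorProduct.map f g z ∈ tensorSubalgebra V' W' :=
  tensorSubalgebra_le_comap (f := Algebra.TensorProduct.map f g)
    (fun _ hx => tmul_mem_tensorSubalgebra (hf hx) (hg (one_mem _)))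
    (fun _ hy => tmul_mem_tensorSubalgebra (hf (one_mem _)) (hg hy)) hz

theorem comm_mem_tensorSubalgebra {V : Subalgebra k X} {W : Subalgebra k Y} {z : X ⊗[k] Y}
    (hz : z ∈ tensorSubalgebra V W) :
    Algebra.TensorProduct.comm k X Y z ∈ tensorSubalgebra W V :=
  tensorSubalgebra_le_comap (f := (Algebra.TensorProduct.comm k X Y).toAlgHom)
    (fun _ hx => tmul_mem_tensorSubalgebra (one_mem _) hx)
    (fun _ hy => tmul_mem_tensorSubalgebra hy (one_mem _)) hz

theorem assoc_mem_tensorSubalgebra {U : Subalgebra k X} {V : Subalgebra k Y} {W : Subalgebra k Z}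
    {z : (X ⊗[k] Y) ⊗[k] Z} (hz : z ∈ tensorSubalgebra (tensorSubalgebra U V) W) :
    Algebra.TensorProduct.assoc k k k X Y Z z ∈ tensorSubalgebra U (tensorSubalgebra V W) :=
  tensorSubalgebra_le_comap (f := (Algebra.TensorProduct.assoc k k k X Y Z).toAlgHom)
    (tensorSubalgebra_le_comap
      (f := (Algebra.TensorProduct.assoc k k k X Y Z).toAlgHom.comp
        includeLeft)
      (fun _ hx => tmul_mem_tensorSubalgebra hx (one_mem _))
      fun _ hy => tmul_mem_tensorSubalgebra (one_mem _) (tmul_mem_tensorSubalgebra hy (one_mem _)))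
    (fun _ hw => tmul_mem_tensorSubalgebra (one_mem _) (tmul_mem_tensorSubalgebra (one_mem _) hw))
    hz

theorem assoc_symm_mem_tensorSubalgebra {U : Subalgebra k X} {V : Subalgebra k Y}
    {W : Subalgebra k Z} {z : X ⊗[k] (Y ⊗[k] Z)}
    (hz : z ∈ tensorSubalgebra U (tensorSubalgebra V W)) :
    (Algebra.TensorProduct.assoc k k k X Y Z).symm z ∈
      tensorSubalgebra (tensorSubalgebra U V) W :=
  tensorSubalgebra_le_comap (f := (Algebra.TensorProduct.assoc k k k X Y Z).symm.toAlgHom)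
    (fun _ hu => tmul_mem_tensorSubalgebra (tmul_mem_tensorSubalgebra hu (one_mem _)) (one_mem _))
    (tensorSubalgebra_le_comap
      (f := (Algebra.TensorProduct.assoc k k k X Y Z).symm.toAlgHom.comp
        includeRight)
      (fun _ hy => tmul_mem_tensorSubalgebra (tmul_mem_tensorSubalgebra (one_mem _) hy) (one_mem _))
      fun _ hw => tmul_mem_tensorSubalgebra (one_mem _) hw)
    hz

theorem mem_tensorSubalgebra_top_left_iff {W : Subalgebra k Y} {z : X ⊗[k] Y} :
    z ∈ tensorSubalgebra ⊤ W ↔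
      z ∈ LinearMap.range ((Subalgebra.toSubmodule W).subtype.lTensor X) := by
  have hsurj : Function.Surjective ((⊤ : Subalgebra k X).val.toLinearMap.rTensor
      (Subalgebra.toSubmodule W)) :=
    LinearMap.rTensor_surjective _ fun x => ⟨⟨x, trivial⟩, rfl⟩
  rw [← LinearMap.range_comp_of_range_eq_top _ (LinearMap.range_eq_top.mpr hsurj),
    LinearMap.lTensor_comp_rTensor]
  rfl

theorem mem_tensorSubalgebra_top_right_iff {V : Subalgebra k X} {z : X ⊗[k] Y} :
    z ∈ tensorSubalgebra V ⊤ ↔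
      z ∈ LinearMap.range ((Subalgebra.toSubmodule V).subtype.rTensor Y) := by
  have hsurj : Function.Surjective ((⊤ : Subalgebra k Y).val.toLinearMap.lTensor
      (Subalgebra.toSubmodule V)) :=
    LinearMap.lTensor_surjective _ fun y => ⟨⟨y, trivial⟩, rfl⟩
  rw [← LinearMap.range_comp_of_range_eq_top _ (LinearMap.range_eq_top.mpr hsurj),
    LinearMap.rTensor_comp_lTensor]
  rfl

theorem mem_tensorSubalgebra_top_comap {f : Y →ₐ[k] Y'} {W : Subalgebra k Y'} {z : X ⊗[k] Y}
    (hz : Algebra.TensorProduct.map (.id k X) f z ∈ tensorSubalgebra ⊤ W) :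
    z ∈ tensorSubalgebra ⊤ (W.comap f) := by
  rw [mem_tensorSubalgebra_top_left_iff] at hz ⊢
  exact (mem_range_lTensor_comap_subtype_iff f.toLinearMap (Subalgebra.toSubmodule W) z).mpr hz

theorem mem_tensorSubalgebra_comap_top {f : X →ₐ[k] X'} {V : Subalgebra k X'} {z : X ⊗[k] Y}
    (hz : Algebra.TensorProduct.map f (.id k Y) z ∈ tensorSubalgebra V ⊤) :
    z ∈ tensorSubalgebra (V.comap f) ⊤ := by
  have hcomm := comm_mem_tensorSubalgebra hz
  rw [Algebra.TensorProduct.comm_comp_map_apply] at hcomm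
  rw [← (Algebra.TensorProduct.comm k X Y).symm_apply_apply z]
  exact comm_mem_tensorSubalgebra (mem_tensorSubalgebra_top_comap hcomm)

theorem mem_tensorSubalgebra_of_mem_of_mem {V : Subalgebra k X} {W : Subalgebra k Y} {z : X ⊗[k] Y}
    (hV : z ∈ tensorSubalgebra V ⊤) (hW : z ∈ tensorSubalgebra ⊤ W) :
    z ∈ tensorSubalgebra V W :=
  mem_range_map_subtype_of_mem_range_rTensor_of_mem_range_lTensor
    (V := Subalgebra.toSubmodule V) (W := Subalgebra.toSubmodule W)
    (mem_tensorSubalgebra_top_right_iff.mp hV) (mem_tensorSubalgebra_top_left_iff.mp hW)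

end TensorSubalgebra

section Coaction

variable {k : Type*} [Field k] {A B : Type*} [CommRing A] [Algebra k A] [CommRing B] [Algebra k B]

/-- The map `B ⊗ B → B ⊗ A`, `b ⊗ b' ↦ (b ⊗ 1) * ρ b'`; geometrically `(x, g) ↦ (x, x * g)`. -/
noncomputable def galoisMap (ρ : B →ₐ[k] B ⊗[k] A) : B ⊗[k] B →ₐ[k] B ⊗[k] A :=
  Algebra.TensorProduct.lift includeLeft ρ fun _ _ => Commute.all _ _

theorem galoisMap_tmul (ρ : B →ₐ[k] B ⊗[k] A) (b c : B) :
    galoisMap ρ (b ⊗ₜ c) = b ⊗ₜ 1 * ρ c :=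
  Algebra.TensorProduct.lift_tmul ..

theorem galoisMap_one_tmul (ρ : B →ₐ[k] B ⊗[k] A) (b : B) : galoisMap ρ (1 ⊗ₜ b) = ρ b := by
  rw [galoisMap_tmul, ← Algebra.TensorProduct.one_def, one_mul]

/-- The translate `x * g` of a point `x` of `Spec B` by a point `g` of `Spec A` under the
coaction `ρ`. -/
noncomputable def translatePoint (ρ : B →ₐ[k] B ⊗[k] A) {R : Type*} [CommRing R] [Algebra k R]
    (x : B →ₐ[k] R) (g : A →ₐ[k] R) : B →ₐ[k] R :=
  (Algebra.TensorProduct.lift x g fun _ _ => Commute.all _ _).comp ρ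

/-- An algebraic record of a simply transitive right action of `Spec A` on `Spec B`: `ρ` is the
action, `σ` the inversion of `Spec A`. Of the axioms of an action only `(x * g) * g⁻¹ = x` is
kept; together with simple transitivity it is what extending points requires. -/
structure IsPrincipalCoaction (ρ : B →ₐ[k] B ⊗[k] A) (σ : A →ₐ[k] A) : Prop where
  galoisMap_bijective : Function.Bijective (galoisMap ρ)
  translatePoint_translatePoint_inv :
    translatePoint ρ ρ (includeRight.comp σ) =
      includeLeft

variable {ρ : B →ₐ[k] B ⊗[k] A} {σ : A →ₐ[k] A} {R R' : Type*} [CommRing R] [Algebra k R]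
  [CommRing R'] [Algebra k R']

theorem comp_translatePoint (f : R →ₐ[k] R') (x : B →ₐ[k] R) (g : A →ₐ[k] R) :
    f.comp (translatePoint ρ x g) = translatePoint ρ (f.comp x) (f.comp g) := by
  rw [translatePoint, translatePoint, ← AlgHom.comp_assoc]
  congr 1
  ext <;> simp

theorem translatePoint_comp {A' B' : Type*} [CommRing A'] [Algebra k A'] [CommRing B']
    [Algebra k B'] {ρ' : B' →ₐ[k] B' ⊗[k] A'} {i : B →ₐ[k] B'} {j : A →ₐ[k] A'}
    (h : ρ'.comp i = (Algebra.TensorProduct.map i j).comp ρ) (x : B' →ₐ[k] R) (g : A' →ₐ[k] R) :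
    (translatePoint ρ' x g).comp i = translatePoint ρ (x.comp i) (g.comp j) := by
  rw [translatePoint, translatePoint, AlgHom.comp_assoc, h, ← AlgHom.comp_assoc]
  congr 1
  ext <;> simp

theorem exists_translatePoint_eq (hρ : Function.Bijective (galoisMap ρ)) (x y : B →ₐ[k] R) :
    ∃ g : A →ₐ[k] R, translatePoint ρ x g = y := by
  let Γ : B ⊗[k] B ≃ₐ[k] B ⊗[k] A := AlgEquiv.ofBijective (galoisMap ρ) hρ
  let xy : B ⊗[k] B →ₐ[k] R := Algebra.TensorProduct.lift x y fun _ _ => Commute.all _ _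
  let e : B ⊗[k] A →ₐ[k] R := xy.comp Γ.symm
  have eΓ (z : B ⊗[k] B) : e (galoisMap ρ z) = xy z := congrArg xy (Γ.symm_apply_apply z)
  have e_left (b : B) : e (b ⊗ₜ 1) = x b := by
    simpa [xy, galoisMap_tmul] using eΓ (b ⊗ₜ 1)
  have e_lift : Algebra.TensorProduct.lift x (e.comp includeRight)
      (fun _ _ => Commute.all _ _) = e := by
    ext b
    · simp [e_left]
    · simp
  refine ⟨e.comp includeRight, AlgHom.ext fun b => ?_⟩
  rw [translatePoint, e_lift, AlgHom.comp_apply, ← galoisMap_one_tmul, eΓ]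
  simp [xy]

theorem IsPrincipalCoaction.translatePoint_inv (h : IsPrincipalCoaction ρ σ) (x : B →ₐ[k] R)
    (g : A →ₐ[k] R) : translatePoint ρ (translatePoint ρ x g) (g.comp σ) = x := by
  let xg : B ⊗[k] A →ₐ[k] R := Algebra.TensorProduct.lift x g fun _ _ => Commute.all _ _
  have hg : g.comp σ = xg.comp (includeRight.comp σ) := by ext; simp [xg]
  rw [hg, translatePoint.eq_def ρ x g, ← comp_translatePoint, h.translatePoint_translatePoint_inv]
  ext
  simp

theorem finiteType_of_galoisMap_bijective [Nontrivial B] [Algebra.FiniteType k A]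
    (hρ : Function.Bijective (galoisMap ρ)) : Algebra.FiniteType k B := by
  let Γ : B ⊗[k] B ≃ₐ[B] B ⊗[k] A := AlgEquiv.ofBijective
    (Algebra.TensorProduct.lift (Algebra.ofId B _) ρ fun _ _ => Commute.all _ _) hρ
  have : Algebra.FiniteType B (B ⊗[k] B) := .equiv inferInstance Γ.symm
  exact .of_finiteType_tensorProduct_of_faithfullyFlat B

theorem IsPrincipalCoaction.exists_algHom_comp_eq [IsAlgClosed k] {A' B' : Type*} [CommRing A']
    [Algebra k A'] [CommRing B'] [Algebra k B'] [Algebra.FiniteType k B] [Algebra.FiniteType k B']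
    [Algebra.FiniteType k A'] {ρ' : B' →ₐ[k] B' ⊗[k] A'} {σ' : A' →ₐ[k] A'}
    (h : IsPrincipalCoaction ρ σ) {i : B →ₐ[k] B'}
    {j : A →ₐ[k] A'} (hi : Function.Injective i) (hj : Function.Injective j)
    (hij : ρ'.comp i = (Algebra.TensorProduct.map i j).comp ρ) (hσ : σ'.comp j = j.comp σ)
    (x : B →ₐ[k] k) : ∃ x' : B' →ₐ[k] k, x'.comp i = x := by
  have : Nontrivial B := x.toRingHom.domain_nontrivial
  obtain ⟨r, hr, lift_of_ne_zero⟩ := exists_forall_exists_algHom_comp_eq i hi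
  let orbit : B →ₐ[k] A := translatePoint ρ ((Algebra.ofId k A).comp x) (.id k A)
  obtain ⟨κ, hκ⟩ :=
    exists_translatePoint_eq h.galoisMap_bijective ((Algebra.ofId k B).comp x) (.id k B)
  have orbit_inv : κ.comp orbit = .id k B := by
    rw [comp_translatePoint, ← hκ]
    congr 1
    ext
    simp
  have orbit_r : ¬IsNilpotent (j (orbit r)) := by
    have hκr : κ (orbit r) = r := DFunLike.congr_fun orbit_inv r
    rw [IsNilpotent.map_iff hj]
    exact fun hnil => hr (hκr ▸ hnil.map κ)
  obtain ⟨g, hg⟩ := exists_algHom_apply_ne_zero (k := k) orbit_r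
  have translatePoint_eq : translatePoint ρ x (g.comp j) = (g.comp j).comp orbit := by
    rw [comp_translatePoint]
    congr 1
    ext
    simp
  obtain ⟨y, hy⟩ := lift_of_ne_zero (translatePoint ρ x (g.comp j))
    (by simpa [translatePoint_eq] using hg)
  refine ⟨translatePoint ρ' y (g.comp σ'), ?_⟩
  rw [translatePoint_comp hij, hy, AlgHom.comp_assoc, hσ, ← AlgHom.comp_assoc, h.translatePoint_inv]

end Coaction

section Restriction

variable {k : Type*} [Field k] {A B : Type*} [CommRing A] [Algebra k A] [CommRing B] [Algebra k B]
  {ρ : B →ₐ[k] B ⊗[k] A} {σ : A →ₐ[k] A} {P P' : Subalgebra k B} {S S' : Subalgebra k A}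

/-- The coaction of `S` on `P` induced by a coaction `ρ` of `A` on `B`, for subalgebras with
`ρ P ⊆ P ⊗ S`. -/
noncomputable def restrictCoaction (h : P ≤ (tensorSubalgebra P S).comap ρ) : P →ₐ[k] P ⊗[k] S :=
  (AlgEquiv.ofInjective _ (map_val_injective P S)).symm.toAlgHom.comp
    ((ρ.comp P.val).codRestrict (tensorSubalgebra P S) fun b => h b.2)

theorem map_val_comp_restrictCoaction (h : P ≤ (tensorSubalgebra P S).comap ρ) :
    (Algebra.TensorProduct.map P.val S.val).comp (restrictCoaction h) = ρ.comp P.val := by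
  ext b
  exact congrArg Subtype.val
    ((AlgEquiv.ofInjective _ (map_val_injective P S)).apply_symm_apply ⟨ρ b, h b.2⟩)

theorem restrictCoaction_comp_inclusion (h : P ≤ (tensorSubalgebra P S).comap ρ)
    (h' : P' ≤ (tensorSubalgebra P' S').comap ρ) (hP : P ≤ P') (hS : S ≤ S') :
    (restrictCoaction h').comp (Subalgebra.inclusion hP) =
      (Algebra.TensorProduct.map (Subalgebra.inclusion hP) (Subalgebra.inclusion hS)).comp
        (restrictCoaction h) := by
  refine (AlgHom.cancel_left (map_val_injective P' S')).mp ?_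
  rw [← AlgHom.comp_assoc, map_val_comp_restrictCoaction, ← AlgHom.comp_assoc,
    ← Algebra.TensorProduct.map_comp]
  exact (map_val_comp_restrictCoaction h).symm

theorem map_val_comp_galoisMap_restrictCoaction (h : P ≤ (tensorSubalgebra P S).comap ρ) :
    (Algebra.TensorProduct.map P.val S.val).comp (galoisMap (restrictCoaction h)) =
      (galoisMap ρ).comp (Algebra.TensorProduct.map P.val P.val) := by
  ext b
  · simp [galoisMap_tmul]
  · simpa [galoisMap_one_tmul] using DFunLike.congr_fun (map_val_comp_restrictCoaction h) b

theorem galoisMap_restrictCoaction_bijective (hinj : Function.Injective (galoisMap ρ))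
    (h : P ≤ (tensorSubalgebra P S).comap ρ)
    (hS : ∀ a ∈ S, ∃ z ∈ tensorSubalgebra P P, galoisMap ρ z = 1 ⊗ₜ a) :
    Function.Bijective (galoisMap (restrictCoaction h)) := by
  have hsq := map_val_comp_galoisMap_restrictCoaction h
  constructor
  · refine .of_comp (f := Algebra.TensorProduct.map P.val S.val) ?_
    rw [← AlgHom.coe_comp, hsq, AlgHom.coe_comp]
    exact hinj.comp (map_val_injective P P)
  · rw [← AlgHom.range_eq_top, ← top_le_iff, ← tensorSubalgebra_top_top, tensorSubalgebra_le_iff]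
    refine ⟨fun b _ => ⟨b ⊗ₜ 1, by simp [galoisMap_tmul]⟩, fun a _ => ?_⟩
    obtain ⟨_, ⟨w, rfl⟩, hw⟩ := hS a a.2
    exact ⟨w, map_val_injective P S ((DFunLike.congr_fun hsq w).trans hw)⟩

theorem IsPrincipalCoaction.restrict (hρ : IsPrincipalCoaction ρ σ)
    (h : P ≤ (tensorSubalgebra P S).comap ρ) (hσ : S ≤ S.comap σ)
    (hS : ∀ a ∈ S, ∃ z ∈ tensorSubalgebra P P, galoisMap ρ z = 1 ⊗ₜ a) :
    IsPrincipalCoaction (restrictCoaction h) ((σ.comp S.val).codRestrict S fun a => hσ a.2) where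
  galoisMap_bijective := galoisMap_restrictCoaction_bijective hρ.galoisMap_bijective.injective h hS
  translatePoint_translatePoint_inv := by
    refine (AlgHom.cancel_left (map_val_injective P S)).mp ?_
    have hinv : (Algebra.TensorProduct.map P.val S.val).comp
        (includeRight.comp
          ((σ.comp S.val).codRestrict S fun a => hσ a.2)) =
        (includeRight.comp σ).comp S.val := by
      ext
      rfl
    rw [comp_translatePoint, map_val_comp_restrictCoaction, hinv,
      ← translatePoint_comp (map_val_comp_restrictCoaction h).symm,
      hρ.translatePoint_translatePoint_inv]
    ext
    simp

/-- Exchanging the two factors of `Spec B × Spec B` inverts the group element relating them. -/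
theorem IsPrincipalCoaction.galoisMap_comm (hρ : IsPrincipalCoaction ρ σ) (z : B ⊗[k] B) :
    galoisMap ρ (Algebra.TensorProduct.comm k B B z) =
      Algebra.TensorProduct.lift ρ (includeRight.comp σ)
        (fun _ _ => Commute.all _ _) (galoisMap ρ z) := by
  have hinv (c : B) : Algebra.TensorProduct.lift ρ (includeRight.comp σ)
      (fun _ _ => Commute.all _ _) (ρ c) = c ⊗ₜ 1 :=
    DFunLike.congr_fun hρ.translatePoint_translatePoint_inv c
  induction z with
  | zero => simp
  | add z w hz hw => simp only [map_add, hz, hw]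
  | tmul b c =>
    rw [Algebra.TensorProduct.comm_tmul, galoisMap_tmul, galoisMap_tmul, map_mul, hinv,
      Algebra.TensorProduct.lift_tmul, map_one, mul_one, mul_comm]

end Restriction

section QuotientTorsor

variable {k : Type*} [Field k] {A B : Type*} [CommRing A] [HopfAlgebra k A] [CommRing B]
  [Algebra k B] {ρ : B →ₐ[k] B ⊗[k] A} {S S' : Subalgebra k A}

theorem lift_id_antipode_comul (a : A) :
    Algebra.TensorProduct.lift (.id k A) (HopfAlgebra.antipodeAlgHom k A)
      (fun _ _ => Commute.all _ _) (Coalgebra.comul (R := k) a) =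
      algebraMap k A (Coalgebra.counit a) := by
  have hlift : (Algebra.TensorProduct.lift (.id k A) (HopfAlgebra.antipodeAlgHom k A)
      fun _ _ => Commute.all _ _).toLinearMap =
      LinearMap.mul' k A ∘ₗ (HopfAlgebra.antipode k).lTensor A :=
    TensorProduct.ext' fun _ _ => by simp
  exact (DFunLike.congr_fun hlift _).trans (HopfAlgebra.mul_antipode_lTensor_comul_apply a)

theorem IsTorsorAlgebra.map_coaction_coaction (hρ : IsTorsorAlgebra k A B ρ) (b : B) :
    Algebra.TensorProduct.map ρ (.id k A) (ρ b) =
      (Algebra.TensorProduct.assoc k k k B A A).symm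
        (Algebra.TensorProduct.map (.id k B) (Bialgebra.comulAlgHom k A) (ρ b)) :=
  (AlgEquiv.eq_symm_apply _).mpr (hρ.coassoc b)

theorem IsTorsorAlgebra.map_counit_coaction (hρ : IsTorsorAlgebra k A B ρ) (b : B) :
    Algebra.TensorProduct.map (.id k B) (Bialgebra.counitAlgHom k A) (ρ b) = b ⊗ₜ 1 :=
  (TensorProduct.rid k B).eq_symm_apply.mpr (hρ.counit_coaction b)

theorem lift_coaction_includeRight_comp (ρ : B →ₐ[k] B ⊗[k] A) (σ : A →ₐ[k] A) :
    Algebra.TensorProduct.lift ρ (includeRight.comp σ)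
        (fun _ _ => Commute.all _ _) =
      ((Algebra.TensorProduct.map (.id k B)
        (Algebra.TensorProduct.lift (.id k A) σ fun _ _ => Commute.all _ _)).comp
        (Algebra.TensorProduct.assoc k k k B A A).toAlgHom).comp
          (Algebra.TensorProduct.map ρ (.id k A)) := by
  have hone : ((Algebra.TensorProduct.map (.id k B)
      (Algebra.TensorProduct.lift (.id k A) σ fun _ _ => Commute.all _ _)).comp
      (Algebra.TensorProduct.assoc k k k B A A).toAlgHom).comp
        includeLeft = .id k (B ⊗[k] A) := by
    ext <;> simp
  ext b
  · simpa using (DFunLike.congr_fun hone (ρ b)).symm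
  · simp [Algebra.TensorProduct.one_def]

theorem IsTorsorAlgebra.isPrincipalCoaction (hρ : IsTorsorAlgebra k A B ρ) :
    IsPrincipalCoaction ρ (HopfAlgebra.antipodeAlgHom k A) where
  galoisMap_bijective := hρ.galois_bijective
  translatePoint_translatePoint_inv := by
    let mulInv : A ⊗[k] A →ₐ[k] A := Algebra.TensorProduct.lift (.id k A)
      (HopfAlgebra.antipodeAlgHom k A) fun _ _ => Commute.all _ _
    have mulInv_comul : mulInv.comp (Bialgebra.comulAlgHom k A) =
        (Algebra.ofId k A).comp (Bialgebra.counitAlgHom k A) :=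
      AlgHom.ext lift_id_antipode_comul
    ext b
    calc translatePoint ρ ρ
          (includeRight.comp (HopfAlgebra.antipodeAlgHom k A)) b
        = Algebra.TensorProduct.map (.id k B) mulInv
            (Algebra.TensorProduct.map (.id k B) (Bialgebra.comulAlgHom k A) (ρ b)) := by
          rw [translatePoint, lift_coaction_includeRight_comp, AlgHom.comp_apply,
            AlgHom.comp_apply, hρ.map_coaction_coaction]
          exact congrArg (Algebra.TensorProduct.map (.id k B) mulInv)
            ((Algebra.TensorProduct.assoc k k k B A A).apply_symm_apply _)
      _ = Algebra.TensorProduct.map (.id k B) (mulInv.comp (Bialgebra.comulAlgHom k A)) (ρ b) :=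
          by
          rw [Algebra.TensorProduct.map_id_comp, AlgHom.comp_apply]
      _ = Algebra.TensorProduct.map (.id k B) (Algebra.ofId k A)
            (Algebra.TensorProduct.map (.id k B) (Bialgebra.counitAlgHom k A) (ρ b)) := by
          rw [mulInv_comul, Algebra.TensorProduct.map_id_comp, AlgHom.comp_apply]
      _ = b ⊗ₜ 1 := by rw [hρ.map_counit_coaction]; simp

/-- The coordinate ring of the quotient of the torsor `Spec B` by the kernel of
`Spec A → Spec S`: those `b` whose coaction only involves elements of `S`. -/
def quotientTorsor (ρ : B →ₐ[k] B ⊗[k] A) (S : Subalgebra k A) : Subalgebra k B :=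
  (tensorSubalgebra ⊤ S).comap ρ

theorem quotientTorsor_mono (h : S ≤ S') : quotientTorsor ρ S ≤ quotientTorsor ρ S' :=
  fun _ hb => tensorSubalgebra_mono le_rfl h hb

theorem IsTorsorAlgebra.map_galoisMap_assoc_symm_map (hρ : IsTorsorAlgebra k A B ρ)
    (z : B ⊗[k] B) :
    Algebra.TensorProduct.map (galoisMap ρ) (.id k A)
        ((Algebra.TensorProduct.assoc k k k B B A).symm
          (Algebra.TensorProduct.map (.id k B) ρ z)) =
      (Algebra.TensorProduct.assoc k k k B A A).symm
        (Algebra.TensorProduct.map (.id k B) (Bialgebra.comulAlgHom k A) (galoisMap ρ z)) := by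
  have hρ_left : (Algebra.TensorProduct.map (galoisMap ρ) (.id k A)).comp
      ((Algebra.TensorProduct.assoc k k k B B A).symm.toAlgHom.comp
        includeRight) = Algebra.TensorProduct.map ρ (.id k A) := by
    ext b
    · simp [galoisMap_one_tmul]
    · simp [Algebra.TensorProduct.one_def, galoisMap_one_tmul]
  have hone (c : B) := (DFunLike.congr_fun hρ_left (ρ c)).trans (hρ.map_coaction_coaction c)
  suffices hcomp : (Algebra.TensorProduct.map (galoisMap ρ) (.id k A)).comp
      ((Algebra.TensorProduct.assoc k k k B B A).symm.toAlgHom.comp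
        (Algebra.TensorProduct.map (.id k B) ρ)) =
      ((Algebra.TensorProduct.assoc k k k B A A).symm.toAlgHom.comp
        (Algebra.TensorProduct.map (.id k B) (Bialgebra.comulAlgHom k A))).comp (galoisMap ρ) from
    DFunLike.congr_fun hcomp z
  ext b
  · simp [galoisMap_tmul, Algebra.TensorProduct.one_def]
  · simpa [galoisMap_one_tmul] using hone b

theorem IsTorsorAlgebra.quotientTorsor_le_comap (hρ : IsTorsorAlgebra k A B ρ)
    (hS : S.IsHopfSub k) :
    quotientTorsor ρ S ≤ (tensorSubalgebra (quotientTorsor ρ S) S).comap ρ := by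
  intro b hb
  refine mem_tensorSubalgebra_of_mem_of_mem (mem_tensorSubalgebra_comap_top ?_) hb
  change Algebra.TensorProduct.map ρ (.id k A) (ρ b) ∈ _
  rw [hρ.map_coaction_coaction]
  exact tensorSubalgebra_mono le_rfl le_top <| assoc_symm_mem_tensorSubalgebra <|
    map_mem_tensorSubalgebra le_rfl hS.1 hb

theorem IsTorsorAlgebra.mem_tensorSubalgebra_top_quotientTorsor (hρ : IsTorsorAlgebra k A B ρ)
    (hS : S.IsHopfSub k) {z : B ⊗[k] B} (hz : galoisMap ρ z ∈ tensorSubalgebra ⊤ S) :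
    z ∈ tensorSubalgebra ⊤ (quotientTorsor ρ S) := by
  let Γ : B ⊗[k] B ≃ₐ[k] B ⊗[k] A := AlgEquiv.ofBijective (galoisMap ρ) hρ.galois_bijective
  have hΓ : (Γ.symm : B ⊗[k] A →ₐ[k] B ⊗[k] B).comp (galoisMap ρ) = .id k _ :=
    AlgHom.ext Γ.symm_apply_apply
  let y := (Algebra.TensorProduct.assoc k k k B B A).symm
    (Algebra.TensorProduct.map (.id k B) ρ z)
  have hy : Algebra.TensorProduct.map (galoisMap ρ) (.id k A) y ∈
      tensorSubalgebra (tensorSubalgebra ⊤ S) S := by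
    rw [hρ.map_galoisMap_assoc_symm_map]
    exact assoc_symm_mem_tensorSubalgebra (map_mem_tensorSubalgebra le_rfl hS.1 hz)
  have hy' : y ∈ tensorSubalgebra ⊤ S := by
    have := map_mem_tensorSubalgebra (f := (Γ.symm : B ⊗[k] A →ₐ[k] B ⊗[k] B)) (g := .id k A)
      (V' := ⊤) le_top le_rfl hy
    rwa [← AlgHom.comp_apply, ← Algebra.TensorProduct.map_comp, hΓ, AlgHom.comp_id,
      Algebra.TensorProduct.map_id] at this
  rw [← tensorSubalgebra_top_top] at hy'
  refine mem_tensorSubalgebra_top_comap ?_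
  simpa [y] using assoc_mem_tensorSubalgebra hy'

theorem IsTorsorAlgebra.exists_galoisMap_eq_one_tmul (hρ : IsTorsorAlgebra k A B ρ)
    (hS : S.IsHopfSub k) {a : A} (ha : a ∈ S) :
    ∃ z ∈ tensorSubalgebra (quotientTorsor ρ S) (quotientTorsor ρ S),
      galoisMap ρ z = 1 ⊗ₜ a := by
  obtain ⟨z, hz⟩ := hρ.galois_bijective.surjective (1 ⊗ₜ a)
  have hz' : galoisMap ρ z = 1 ⊗ₜ a := hz
  have hcomm : galoisMap ρ (Algebra.TensorProduct.comm k B B z) =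
      1 ⊗ₜ HopfAlgebra.antipode k a := by
    rw [hρ.isPrincipalCoaction.galoisMap_comm, hz']
    simp
  have hright := hρ.mem_tensorSubalgebra_top_quotientTorsor hS
    (hz' ▸ tmul_mem_tensorSubalgebra Algebra.mem_top ha)
  have hleft := comm_mem_tensorSubalgebra <| hρ.mem_tensorSubalgebra_top_quotientTorsor hS
    (hcomm ▸ tmul_mem_tensorSubalgebra Algebra.mem_top (hS.2 a ha))
  exact ⟨z, mem_tensorSubalgebra_of_mem_of_mem
    ((Algebra.TensorProduct.comm k B B).symm_apply_apply z ▸ hleft) hright, hz'⟩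

theorem IsTorsorAlgebra.isPrincipalCoaction_restrict (hρ : IsTorsorAlgebra k A B ρ)
    (hS : S.IsHopfSub k) :
    IsPrincipalCoaction (restrictCoaction (hρ.quotientTorsor_le_comap hS))
      (((HopfAlgebra.antipodeAlgHom k A).comp S.val).codRestrict S fun a => hS.2 a a.2) :=
  hρ.isPrincipalCoaction.restrict _ hS.2 fun _ => hρ.exists_galoisMap_eq_one_tmul hS

theorem IsTorsorAlgebra.finiteType_quotientTorsor (hρ : IsTorsorAlgebra k A B ρ)
    (hS : S.IsHopfSub k) (hfg : S.FG) : Algebra.FiniteType k (quotientTorsor ρ S) := by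
  have := hρ.nontrivial
  have : Algebra.FiniteType k S := S.fg_iff_finiteType.mp hfg
  exact finiteType_of_galoisMap_bijective (hρ.isPrincipalCoaction_restrict hS).galoisMap_bijective

theorem IsTorsorAlgebra.exists_algHom_comp_inclusion_eq [IsAlgClosed k]
    (hρ : IsTorsorAlgebra k A B ρ) (hS : S.IsHopfSub k) (hfg : S.FG) (hS' : S'.IsHopfSub k)
    (hfg' : S'.FG) (hle : S ≤ S') (x : quotientTorsor ρ S →ₐ[k] k) :
    ∃ x' : quotientTorsor ρ S' →ₐ[k] k,
      x'.comp (Subalgebra.inclusion (quotientTorsor_mono hle)) = x := by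
  have := hρ.finiteType_quotientTorsor hS hfg
  have := hρ.finiteType_quotientTorsor hS' hfg'
  have : Algebra.FiniteType k S' := S'.fg_iff_finiteType.mp hfg'
  exact (hρ.isPrincipalCoaction_restrict hS).exists_algHom_comp_eq
    (σ' := ((HopfAlgebra.antipodeAlgHom k A).comp S'.val).codRestrict S' fun a => hS'.2 a a.2)
    (Subalgebra.inclusion_injective _) (Subalgebra.inclusion_injective hle)
    (restrictCoaction_comp_inclusion _ (hρ.quotientTorsor_le_comap hS') _ hle) rfl x

end QuotientTorsor

theorem nonempty_algHom_of_forall_exists_extension {k : Type*} [CommSemiring k] {B R : Type*}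
    [Semiring B] [Algebra k B] [Semiring R] [Algebra k R] {C : ℕ → Subalgebra k B}
    (hmono : Monotone C) (hC : ∀ b, ∃ n, b ∈ C n) (hzero : Nonempty (C 0 →ₐ[k] R))
    (hsucc : ∀ n (x : C n →ₐ[k] R), ∃ x' : C (n + 1) →ₐ[k] R,
      x'.comp (Subalgebra.inclusion (hmono n.le_succ)) = x) : Nonempty (B →ₐ[k] R) := by
  obtain ⟨x₀⟩ := hzero
  choose extend extend_comp using hsucc
  let x : ∀ n, C n →ₐ[k] R := fun n => Nat.rec x₀ extend n
  have hle {m n : ℕ} (h : m ≤ n) : x m = (x n).comp (Subalgebra.inclusion (hmono h)) := by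
    induction n, h using Nat.le_induction with
    | base => rfl
    | succ n _ ih =>
      rw [ih, ← extend_comp n (x n)]
      rfl
  have hcompat (m n : ℕ) (h : C m ≤ C n) : x m = (x n).comp (Subalgebra.inclusion h) := by
    rcases le_total m n with hmn | hnm
    · exact hle hmn
    · rw [hle hnm]
      rfl
  have htop : ⊤ ≤ iSup C := fun b _ => (hC b).elim fun n hn => le_iSup C n hn
  exact ⟨(Subalgebra.iSupLift C hmono.directed_le x hcompat ⊤ htop).comp
    Subalgebra.topEquiv.symm.toAlgHom⟩

theorem exists_mem_tensorSubalgebra_of_directed {k : Type*} [Field k] {X Y I : Type*} [CommRing X]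
    [Algebra k X] [CommRing Y] [Algebra k Y] {W : I → Subalgebra k Y}
    (hdir : Directed (· ≤ ·) W) (hunion : ∀ y, ∃ i, y ∈ W i) (z : X ⊗[k] Y) :
    ∃ i, z ∈ tensorSubalgebra ⊤ (W i) := by
  induction z with
  | zero => exact (hunion 0).imp fun _ _ => zero_mem _
  | tmul x y => exact (hunion y).imp fun _ hy => tmul_mem_tensorSubalgebra Algebra.mem_top hy
  | add z w hz hw =>
    obtain ⟨i, hi⟩ := hz
    obtain ⟨j, hj⟩ := hw
    obtain ⟨l, hil, hjl⟩ := hdir i j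
    exact ⟨l, add_mem (tensorSubalgebra_mono le_rfl hil hi) (tensorSubalgebra_mono le_rfl hjl hj)⟩

theorem torsor_trivial_of_countable_general {k : Type*} [Field k] [IsAlgClosed k] {A : Type*}
    [CommRing A] [HopfAlgebra k A] {I : Type*} [Countable I] (𝒜 : I → Subalgebra k A)
    (hdir : Directed (· ≤ ·) 𝒜) (hfg : ∀ i, (𝒜 i).FG) (hhopf : ∀ i, (𝒜 i).IsHopfSub k)
    (hunion : ∀ a : A, ∃ i, a ∈ 𝒜 i) {B : Type*} [CommRing B] [Algebra k B]
    (ρ : B →ₐ[k] B ⊗[k] A) (hρ : IsTorsorAlgebra k A B ρ) : Nonempty (B →ₐ[k] k) := by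
  have := hρ.nontrivial
  have : Encodable I := Encodable.ofCountable I
  have : Inhabited I := ⟨(hunion 0).choose⟩
  let s : ℕ → I := hdir.sequence 𝒜
  have hs : Monotone (𝒜 ∘ s) := hdir.sequence_mono
  refine nonempty_algHom_of_forall_exists_extension (C := fun n => quotientTorsor ρ (𝒜 (s n)))
    (fun _ _ h => quotientTorsor_mono (hs h)) (fun b => ?_) ?_ fun n => ?_
  · obtain ⟨i, hi⟩ := exists_mem_tensorSubalgebra_of_directed hdir hunion (ρ b)
    exact ⟨_, tensorSubalgebra_mono le_rfl (hdir.le_sequence i) hi⟩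
  · have := hρ.finiteType_quotientTorsor (hhopf (s 0)) (hfg (s 0))
    exact (exists_algHom_le_ker (k := k) bot_ne_top).nonempty
  · exact hρ.exists_algHom_comp_inclusion_eq (hhopf _) (hfg _) (hhopf _) (hfg _) (hs n.le_succ)

/-- Over an algebraically closed field `k`, if the commutative Hopf algebra `A` is the directed
union of finitely generated sub-Hopf-algebras indexed by an at most countable directed poset `I`,
then every torsor algebra `B` for `A` admits a `k`-algebra homomorphism `B → k` (i.e. the
corresponding torsor is trivial). -/
theorem torsor_trivial_of_countable {k : Type} [Field k] [IsAlgClosed k]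
    {A : Type} [CommRing A] [HopfAlgebra k A]
    {I : Type} [PartialOrder I] [Nonempty I] [IsDirected I (· ≤ ·)] [Countable I]
    (𝒜 : I → Subalgebra k A) (hmono : Monotone 𝒜)
    (hfg : ∀ i, (𝒜 i).FG) (hhopf : ∀ i, (𝒜 i).IsHopfSub k)
    (hunion : ∀ a : A, ∃ i, a ∈ 𝒜 i)
    {B : Type} [CommRing B] [Algebra k B]
    (ρ : B →ₐ[k] B ⊗[k] A) (hρ : IsTorsorAlgebra k A B ρ) :
    Nonempty (B →ₐ[k] k) :=
  torsor_trivial_of_countable_general 𝒜 hmono.directed_le hfg hhopf hunion ρ hρ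
end

section
/- Let k be an algebraically closed field and let B be a nonzero commutative k-algebra which is generated (as a k-algebra) by a set of generators whose cardinality is strictly less than the cardinality of k. Then there exists a k-algebra homomorphism B → k. Equivalently: if S = k[T_i : i ∈ I] is a polynomial ring over k in a set of variables with card I < card k and 𝔰 ⊊ S is a proper ideal, then there is a maximal ideal 𝔪 of S with 𝔰 ⊆ 𝔪 and S/𝔪 = k. -/
/-!
Let `L` be a residue field of a nonzero `k`-algebra generated by a set `s` with `#s < #k`. If `s`
is finite, `L` is algebraic over `k` by Zariski's lemma. If `s` is infinite, the monomials in `s`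
give `dim L ≤ #s < #k`, whereas a transcendental `x ∈ L` would yield `#k` linearly independent
elements `(x - a)⁻¹`, `a ∈ k`; so `L` is again algebraic over `k`. An algebraic extension of `k`
embeds into any algebraically closed extension, in particular into `k` itself when `k` is
algebraically closed.
-/

open Cardinal

universe u v w

section Residue

variable {k : Type u} [Field k]

theorem isAlgebraic_of_lift_rank_lt_lift_mk {L : Type v} [Field L] [Algebra k L]
    (h : lift.{u} (Module.rank k L) < lift.{v} #k) : Algebra.IsAlgebraic k L := by
  by_contra hL
  obtain ⟨x, hx⟩ := Algebra.transcendental_iff_not_isAlgebraic.2 hL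
  exact hx.linearIndependent_sub_inv.cardinal_lift_le_rank.not_gt h

theorem isAlgebraic_of_adjoin_eq_top_of_lift_mk_lt {L : Type v} [Field L] [Algebra k L]
    {s : Set L} (hs : Algebra.adjoin k s = ⊤) (hcard : lift.{u} #s < lift.{v} #k) :
    Algebra.IsAlgebraic k L := by
  rcases s.finite_or_infinite with hfin | hinf
  · have : Algebra.FiniteType k L := ⟨Subalgebra.fg_def.2 ⟨s, hfin, hs⟩⟩
    have : Module.Finite k L := finite_of_finite_type_of_isJacobsonRing k L
    infer_instance
  · have hrank : Module.rank k L ≤ #s := by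
      calc Module.rank k L = Module.rank k (Algebra.adjoin k s) := by rw [hs, Subalgebra.rank_top]
        _ ≤ max #s ℵ₀ := Algebra.rank_adjoin_le s
        _ = #s := max_eq_left (infinite_iff.1 hinf.to_subtype)
    exact isAlgebraic_of_lift_rank_lt_lift_mk ((lift_le.2 hrank).trans_lt hcard)

theorem isAlgebraic_quotient_of_adjoin_eq_top_of_lift_mk_lt {B : Type v} [CommRing B]
    [Algebra k B] {s : Set B} (hs : Algebra.adjoin k s = ⊤) (hcard : lift.{u} #s < lift.{v} #k)
    (𝔪 : Ideal B) [𝔪.IsMaximal] : Algebra.IsAlgebraic k (B ⧸ 𝔪) := by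
  let : Field (B ⧸ 𝔪) := Ideal.Quotient.field 𝔪
  let π : B →ₐ[k] B ⧸ 𝔪 := Ideal.Quotient.mkₐ k 𝔪
  have hπs : Algebra.adjoin k (π '' s) = ⊤ := by
    rw [← AlgHom.map_adjoin, hs, Algebra.map_top, AlgHom.range_eq_top]
    exact Ideal.Quotient.mkₐ_surjective k 𝔪
  exact isAlgebraic_of_adjoin_eq_top_of_lift_mk_lt hπs ((lift_le.2 mk_image_le).trans_lt hcard)

end Residue

theorem nullstellensatz_small_card_general {k : Type u} {K : Type v} [Field k] [Field K]
    [IsAlgClosed K] [Algebra k K] :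
    (∀ (B : Type w) [CommRing B] [Algebra k B] [Nontrivial B] (s : Set B),
      lift.{u} #s < lift.{w} #k → Algebra.adjoin k s = ⊤ → Nonempty (B →ₐ[k] K)) ∧
    (∀ (I : Type w) (𝔰 : Ideal (MvPolynomial I k)),
      lift.{u} #I < lift.{w} #k → 𝔰 ≠ ⊤ →
      ∃ 𝔪 : Ideal (MvPolynomial I k), 𝔰 ≤ 𝔪 ∧ 𝔪.IsMaximal ∧
        Nonempty ((MvPolynomial I k ⧸ 𝔪) →ₐ[k] K)) := by
  refine ⟨fun B _ _ _ s hcard hs ↦ ?_, fun I 𝔰 hcard h𝔰 ↦ ?_⟩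
  · obtain ⟨𝔪, _⟩ := Ideal.exists_maximal B
    have := isAlgebraic_quotient_of_adjoin_eq_top_of_lift_mk_lt hs hcard 𝔪
    exact ⟨(IsAlgClosed.lift : B ⧸ 𝔪 →ₐ[k] K).comp (Ideal.Quotient.mkₐ k 𝔪)⟩
  · obtain ⟨𝔪, h𝔪, hle⟩ := Ideal.exists_le_maximal 𝔰 h𝔰
    have hX : lift.{u} #(Set.range (MvPolynomial.X : I → MvPolynomial I k)) <
        lift.{max w u} #k := by
      have hrange := mk_range_le_lift (f := (MvPolynomial.X : I → MvPolynomial I k))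
      rw [lift_umax.{w, u}, lift_id'.{w, u}] at hrange
      rw [lift_id'.{u, w}, lift_umax.{u, w}]
      exact hrange.trans_lt hcard
    have := isAlgebraic_quotient_of_adjoin_eq_top_of_lift_mk_lt MvPolynomial.adjoin_range_X hX 𝔪
    exact ⟨𝔪, hle, h𝔪, ⟨IsAlgClosed.lift⟩⟩

/-- Hilbert's Nullstellensatz in possibly infinitely many variables: over an algebraically closed
field `k`, (1) every nonzero commutative `k`-algebra generated by strictly fewer than `card k`
elements admits a `k`-algebra homomorphism to `k`; equivalently, (2) every proper ideal `𝔰` of a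
polynomial ring `k[Tᵢ : i ∈ I]` with `card I < card k` is contained in a maximal ideal `𝔪` with
residue field `k`. -/
theorem nullstellensatz_small_card {k : Type u} [Field k] [IsAlgClosed k] :
    (∀ (B : Type u) [CommRing B] [Algebra k B] [Nontrivial B] (s : Set B),
      Cardinal.mk s < Cardinal.mk k → Algebra.adjoin k s = ⊤ →
      Nonempty (B →ₐ[k] k)) ∧
    (∀ (I : Type u) (𝔰 : Ideal (MvPolynomial I k)),
      Cardinal.mk I < Cardinal.mk k → 𝔰 ≠ ⊤ →
      ∃ 𝔪 : Ideal (MvPolynomial I k), 𝔰 ≤ 𝔪 ∧ 𝔪.IsMaximal ∧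
        Nonempty ((MvPolynomial I k ⧸ 𝔪) ≃ₐ[k] k)) := by
  refine ⟨fun B _ _ _ s hcard ↦ nullstellensatz_small_card_general.1 B s (lift_lt.2 hcard),
    fun I 𝔰 hcard h𝔰 ↦ ?_⟩
  obtain ⟨𝔪, hle, h𝔪, ⟨φ⟩⟩ :=
    nullstellensatz_small_card_general (K := k).2 I 𝔰 (lift_lt.2 hcard) h𝔰
  let : Field (MvPolynomial I k ⧸ 𝔪) := Ideal.Quotient.field 𝔪
  exact ⟨𝔪, hle, h𝔪, ⟨AlgEquiv.ofBijective φ ⟨φ.injective, fun c ↦ ⟨_, φ.commutes c⟩⟩⟩⟩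
end
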